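/- Let p = (p_1, ..., p_n) be integers ≥ 2 and L(p) the abelian group generated by x_1, ..., x_n, c with p_i x_i = c for all i. The torsion subgroup of L(p) together with the quotient by torsion: L(p)/torsion ≅ Z, and the image of c in L(p)/torsion is divisible by each p_i. -/

import Mathlib

/-! The degree map `x_i ↦ ∏_{j ≠ i} p_j`, `c ↦ ∏_j p_j` respects the relations and does not vanish
at `c`. Every generator has a nonzero multiple on the line through `c`, so a linear form that is
nonzero at `c` kills only torsion elements. Hence `L(p)` modulo torsion is the image of the degree
map, a nonzero finitely generated ideal of a Bézout domain, and such an ideal is free of rank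
one. -/

open Submodule
open scoped nonZeroDivisors

section Torsion

variable {R M N : Type*} [CommRing R] [AddCommGroup M] [Module R M] [AddCommGroup N] [Module R N]

theorem comap_torsion_of_injective {f : M →ₗ[R] N} (hf : Function.Injective f) :
    (torsion R N).comap f = torsion R M := by
  ext m
  simp only [mem_comap, mem_torsion_iff, Submonoid.smul_def, ← map_smul,
    map_eq_zero_iff f hf]

theorem isTorsion_quotient_span_singleton_of_smul_eq {ι : Type*} {a : ι → R} (ha : ∀ i, a i ∈ R⁰)
    {x : ι → M} {c : M} (hx : ∀ i, a i • x i = c)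
    (hspan : span R (insert c (Set.range x)) = ⊤) :
    Module.IsTorsion R (M ⧸ R ∙ c) := by
  have mk_c : (R ∙ c).mkQ c = 0 := (Submodule.Quotient.mk_eq_zero _).mpr (mem_span_singleton_self c)
  have generators_le : insert c (Set.range x) ⊆ (torsion R (M ⧸ R ∙ c)).comap (R ∙ c).mkQ := by
    refine Set.insert_subset ?_ (Set.range_subset_iff.mpr fun i ↦ ⟨⟨a i, ha i⟩, ?_⟩)
    · rw [SetLike.mem_coe, mem_comap, mk_c]
      exact zero_mem _
    · rw [Submonoid.mk_smul, ← map_smul, hx, mk_c]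
  refine (isTorsion'_iff_torsion'_eq_top (R := R) R⁰).mpr ?_
  rw [eq_top_iff, ← range_mkQ (R ∙ c), LinearMap.range_le_iff_comap, eq_top_iff, ← hspan]
  exact span_le.mpr generators_le

theorem torsion_le_ker [Module.IsTorsionFree R N] (f : M →ₗ[R] N) :
    torsion R M ≤ LinearMap.ker f := by
  rintro m ⟨a, ham⟩
  have smul_eq : (a : R) • f m = (a : R) • (0 : N) := by
    rw [← map_smul, ← Submonoid.smul_def, ham, map_zero, smul_zero]
  exact (isRegular_iff_mem_nonZeroDivisors.mpr a.2).isSMulRegular smul_eq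

theorem ker_eq_torsion_of_isTorsion_quotient {f : M →ₗ[R] R} {c : M} (hfc : f c ∈ R⁰)
    (hc : Module.IsTorsion R (M ⧸ R ∙ c)) : LinearMap.ker f = torsion R M := by
  refine le_antisymm (fun m hm ↦ ?_) (torsion_le_ker f)
  obtain ⟨a, ha⟩ := @hc ((R ∙ c).mkQ m)
  obtain ⟨r, hr⟩ : ∃ r : R, r • c = a • m :=
    mem_span_singleton.mp ((Submodule.Quotient.mk_eq_zero _).mp ha)
  have mul_apply_eq_zero : r * f c = 0 := by
    rw [← smul_eq_mul, ← map_smul, hr, Submonoid.smul_def, map_smul, hm, smul_zero]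
  have r_eq_zero : r = 0 := (mul_right_mem_nonZeroDivisors_eq_zero_iff hfc).mp mul_apply_eq_zero
  exact ⟨a, by rw [← hr, r_eq_zero, zero_smul]⟩

theorem nonempty_quotient_ker_linearEquiv [IsDomain R] [IsBezout R] [Module.Finite R M]
    {f : M →ₗ[R] R} (hf : f ≠ 0) : Nonempty ((M ⧸ LinearMap.ker f) ≃ₗ[R] R) := by
  have : (LinearMap.range f).IsPrincipal := IsBezout.isPrincipal_of_FG _ (fg_range f)
  have range_ne_bot : LinearMap.range f ≠ ⊥ := mt LinearMap.range_eq_bot.mp hf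
  exact ⟨f.quotKerEquivRange.trans (Ideal.isoBaseOfIsPrincipal range_ne_bot).symm⟩

end Torsion

/-- The module `L(p)` over a commutative ring `R` with generators `x_1, ..., x_n, c` and relations
`p_i x_i = c`; it is the group `L(p)` when `R = ℤ`. The generator `c` is the last of the `n + 1`
coordinates. -/
abbrev WeightModule {R : Type*} [CommRing R] {n : ℕ} (p : Fin n → R) : Type _ :=
  (Fin (n + 1) → R) ⧸ span R {v : Fin (n + 1) → R | ∃ i : Fin n,
    v = p i • Pi.single i.castSucc 1 - Pi.single (Fin.last n) 1}

namespace WeightModule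

variable {R : Type*} [CommRing R] {n : ℕ} (p : Fin n → R)

/-- The generator `x_i` of `L(p)`. -/
def gen (i : Fin n) : WeightModule p :=
  Submodule.Quotient.mk (Pi.single i.castSucc 1)

/-- The canonical element `c` of `L(p)`, the common value of the `p_i x_i`. -/
def canonical : WeightModule p :=
  Submodule.Quotient.mk (Pi.single (Fin.last n) 1)

theorem smul_gen (i : Fin n) : p i • gen p i = canonical p :=
  (Submodule.Quotient.eq _).mpr (subset_span ⟨i, rfl⟩)

theorem span_insert_canonical_range_gen :
    span R (insert (canonical p) (Set.range (gen p))) = ⊤ := by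
  rw [eq_top_iff, ← range_mkQ, LinearMap.range_eq_map, ← (Pi.basisFun R (Fin (n + 1))).span_eq,
    map_span_le]
  rintro _ ⟨k, rfl⟩
  rw [Pi.basisFun_apply]
  cases k using Fin.lastCases with
  | last => exact subset_span (Set.mem_insert _ _)
  | cast i => exact subset_span (Set.mem_insert_of_mem _ ⟨i, rfl⟩)

/-- The degrees `∏_{j ≠ i} p_j` of the `x_i`, followed by the degree `∏_j p_j` of `c`: the
coefficients of the degree map on the free module. -/
def generatorDegree : Fin (n + 1) → R :=
  Fin.snoc (α := fun _ ↦ R) (fun i ↦ ∏ j ∈ Finset.univ.erase i, p j) (∏ j, p j)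

theorem linearCombination_generatorDegree_relation (i : Fin n) :
    Fintype.linearCombination R (generatorDegree p)
      (p i • Pi.single i.castSucc 1 - Pi.single (Fin.last n) 1) = 0 := by
  simp [generatorDegree, Fintype.linearCombination_apply_single, Finset.mul_prod_erase]

/-- The degree map on `L(p)`, a linear form that detects torsion. It is normalised by
`c ↦ ∏_j p_j` instead of the least common multiple of the `p_j`, so that it is defined over any
commutative ring; it need not be surjective. -/
def degree : WeightModule p →ₗ[R] R :=
  liftQ _ (Fintype.linearCombination R (generatorDegree p)) <| span_le.mpr <| by
    rintro _ ⟨i, rfl⟩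
    exact linearCombination_generatorDegree_relation p i

theorem degree_canonical : degree p (canonical p) = ∏ j, p j := by
  simp [degree, canonical, generatorDegree, Fintype.linearCombination_apply_single]

variable {p}

theorem ker_degree (hp : ∀ i, p i ∈ R⁰) :
    LinearMap.ker (degree p) = torsion R (WeightModule p) := by
  refine ker_eq_torsion_of_isTorsion_quotient (c := canonical p) ?_
    (isTorsion_quotient_span_singleton_of_smul_eq hp (smul_gen p)
      (span_insert_canonical_range_gen p))
  rw [degree_canonical]
  exact prod_mem fun i _ ↦ hp i

theorem nonempty_quotient_torsion_linearEquiv [IsDomain R] [IsBezout R] (hp : ∀ i, p i ≠ 0) :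
    Nonempty ((WeightModule p ⧸ torsion R (WeightModule p)) ≃ₗ[R] R) := by
  have degree_ne_zero : degree p ≠ 0 := fun h ↦ by
    have : ∏ j, p j = 0 := by rw [← degree_canonical, h, LinearMap.zero_apply]
    exact Finset.prod_ne_zero_iff.mpr (fun i _ ↦ hp i) this
  rw [← ker_degree fun i ↦ mem_nonZeroDivisors_of_ne_zero (hp i)]
  exact nonempty_quotient_ker_linearEquiv degree_ne_zero

end WeightModule

theorem stmt14_general {R L : Type*} [CommRing R] [IsDomain R] [IsBezout R] {n : ℕ} {p : Fin n → R}
    (hp : ∀ i, p i ≠ 0) [AddCommGroup L] [Module R L] (e : L ≃ₗ[R] WeightModule p)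
    {c : L} (hc : e c = WeightModule.canonical p) :
    Nonempty ((L ⧸ torsion R L) ≃ₗ[R] R) ∧
      ∀ i, ∃ y : L ⧸ torsion R L, p i • y = Submodule.Quotient.mk c := by
  have map_torsion : (torsion R L).map (e : L →ₗ[R] WeightModule p) = torsion R _ :=
    (map_equiv_eq_comap_symm e _).trans (comap_torsion_of_injective e.symm.injective)
  have smul_symm_gen (i : Fin n) : p i • e.symm (WeightModule.gen p i) = c := by
    rw [← map_smul, WeightModule.smul_gen, ← hc, e.symm_apply_apply]
  refine ⟨(WeightModule.nonempty_quotient_torsion_linearEquiv hp).map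
    (Submodule.Quotient.equiv _ _ e map_torsion).trans, fun i ↦
      ⟨Submodule.Quotient.mk (e.symm (WeightModule.gen p i)), ?_⟩⟩
  rw [← Submodule.Quotient.mk_smul, smul_symm_gen]

/-- For `p = (p_1, ..., p_n)` with all `p_i ≥ 2`, the group `L(p)` (generated by
`x_1, ..., x_n, c` with `p_i x_i = c`) modulo its torsion subgroup is isomorphic to `ℤ`,
and the image of `c` in `L(p)/torsion` is divisible by each `p_i`. -/
theorem stmt14 (n : ℕ) (p : Fin n → ℕ) (hp : ∀ i, 2 ≤ p i)
    (L : Type) [AddCommGroup L] [Module ℤ L]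
    (e : L ≃ₗ[ℤ] ((Fin (n + 1) → ℤ) ⧸ Submodule.span ℤ
        {v : Fin (n + 1) → ℤ | ∃ i : Fin n,
          v = (p i : ℤ) • Pi.single i.castSucc 1 - Pi.single (Fin.last n) 1}))
    (c : L)
    (hc : e c = Submodule.Quotient.mk (Pi.single (Fin.last n) 1)) :
    Nonempty ((L ⧸ Submodule.torsion ℤ L) ≃ₗ[ℤ] ℤ) ∧
      ∀ i : Fin n, ∃ y : L ⧸ Submodule.torsion ℤ L,
        (p i : ℤ) • y = Submodule.Quotient.mk c := by
  -- The quotient in the goal carries the `ℤ`-module structure of an additive group, not that of a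
  -- quotient of modules; they agree definitionally once this holds for `L`.
  obtain rfl : ‹Module ℤ L› = AddCommGroup.toIntModule L := Subsingleton.elim _ _
  exact (stmt14_general (fun i ↦ Int.natCast_ne_zero.mpr (by have := hp i; lia)) e hc).imp_left
    (.map (·.toAddEquiv.toIntLinearEquiv))
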